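/- arXiv:1403.3080 — 2 statements merged into one kernel-verified Lean document; each statement's English description precedes it below -/
import Mathlib

section
/- For all real a, b > 0, I(a,b) > 1/2 if and only if a > b. -/
/-- The Beta function `B(a,b) = ∫₀¹ t^(a-1) (1-t)^(b-1) dt`. -/
noncomputable def betaFn (a b : ℝ) : ℝ := ∫ t in (0:ℝ)..1, t ^ (a - 1) * (1 - t) ^ (b - 1)

/-- `I(a,b)`: the probability that a `Beta(a,b)` random variable is `≥ 1/2`. -/
noncomputable def I (a b : ℝ) : ℝ :=
  (1 / betaFn a b) * ∫ t in (1/2 : ℝ)..1, t ^ (a - 1) * (1 - t) ^ (b - 1)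

/-!
The substitution `t ↦ 1 - t` exchanges the two parameters, so the mass of `Beta(a, b)` below `1/2`
is the mass of `Beta(b, a)` above `1/2`, that is, `I a b + I b a = 1`. It remains to compare `I a b`
with `I b a`. On `(1/2, 1)` the two densities have the ratio `(t / (1 - t)) ^ (a - b)` with base
greater than `1`, so the density with the larger first parameter is pointwise the larger one.
-/

open Set MeasureTheory

theorem rpow_mul_rpow_lt_rpow_mul_rpow {s t x y : ℝ} (hs : 0 < s) (hst : s < t) (hxy : x < y) :
    t ^ x * s ^ y < t ^ y * s ^ x := by
  have ht : 0 < t := hs.trans hst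
  have h : (t / s) ^ x < (t / s) ^ y :=
    Real.rpow_lt_rpow_of_exponent_lt ((one_lt_div hs).2 hst) hxy
  rwa [Real.div_rpow ht.le hs.le, Real.div_rpow ht.le hs.le,
    div_lt_div_iff₀ (Real.rpow_pos_of_pos hs x) (Real.rpow_pos_of_pos hs y)] at h

theorem integral_lt_integral_of_forall_mem_Ioo_lt {f g : ℝ → ℝ} {c d : ℝ}
    (hf : IntervalIntegrable f volume c d) (hg : IntervalIntegrable g volume c d)
    (hfg : ∀ t ∈ Ioo c d, f t < g t) (hcd : c < d) :
    ∫ t in c..d, f t < ∫ t in c..d, g t := by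
  rw [← sub_pos, ← intervalIntegral.integral_sub hg hf]
  exact intervalIntegral.intervalIntegral_pos_of_pos_on (hg.sub hf)
    (fun t ht ↦ sub_pos.2 (hfg t ht)) hcd

theorem integral_add_integral_reflect {E : Type*} [NormedAddCommGroup E] [NormedSpace ℝ E]
    {f : ℝ → E} {c d m : ℝ} (hcm : IntervalIntegrable f volume c m)
    (hmd : IntervalIntegrable f volume m d) :
    (∫ t in m..d, f t) + ∫ t in (c + d - m)..d, f (c + d - t) = ∫ t in c..d, f t := by
  rw [intervalIntegral.integral_comp_sub_left, add_sub_cancel_right, sub_sub_cancel, add_comm,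
    intervalIntegral.integral_add_adjacent_intervals hcm hmd]

/-- The unnormalised density of the `Beta(a, b)` distribution, whose integrals over `[0, 1]` and
`[1/2, 1]` define `betaFn` and `I`. It represents the density only on `(0, 1)`: no cutoff is imposed
outside. -/
noncomputable def betaKernel (a b t : ℝ) : ℝ := t ^ (a - 1) * (1 - t) ^ (b - 1)

section BetaKernel

theorem betaKernel_one_sub (a b t : ℝ) : betaKernel a b (1 - t) = betaKernel b a t := by
  rw [betaKernel, betaKernel, sub_sub_cancel, mul_comm]

theorem betaKernel_pos (a b : ℝ) {t : ℝ} (ht : t ∈ Ioo 0 1) : 0 < betaKernel a b t :=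
  mul_pos (Real.rpow_pos_of_pos ht.1 _) (Real.rpow_pos_of_pos (sub_pos.2 ht.2) _)

theorem betaKernel_swap_lt {a b t : ℝ} (hab : b < a) (ht : t ∈ Ioo (1 / 2) 1) :
    betaKernel b a t < betaKernel a b t :=
  rpow_mul_rpow_lt_rpow_mul_rpow (sub_pos.2 ht.2) (by linarith [ht.1]) (by linarith)

variable {a b c d : ℝ}

theorem intervalIntegrable_betaKernel (ha : 0 < a) (hb : 0 < b) (hc : c ∈ Icc 0 1)
    (hd : d ∈ Icc 0 1) : IntervalIntegrable (betaKernel a b) volume c d := by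
  suffices h : IntervalIntegrable (betaKernel a b) volume 0 1 from
    h.mono_set (by simpa only [uIcc_of_le zero_le_one] using uIcc_subset_Icc hc hd)
  have hcomplex := Complex.betaIntegral_convergent (u := a) (v := b) (by simpa) (by simpa)
  rw [intervalIntegrable_iff_integrableOn_Ioc_of_le zero_le_one] at hcomplex ⊢
  refine IntegrableOn.congr_fun hcomplex.re (fun t ht ↦ ?_) measurableSet_Ioc
  have h1t : 0 ≤ 1 - t := sub_nonneg.2 ht.2
  norm_cast
  rw [← Complex.ofReal_cpow ht.1.le, ← Complex.ofReal_cpow h1t, ← Complex.ofReal_mul]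
  rfl

theorem integral_betaKernel_pos (ha : 0 < a) (hb : 0 < b) (hc : 0 ≤ c) (hcd : c < d)
    (hd : d ≤ 1) : 0 < ∫ t in c..d, betaKernel a b t :=
  intervalIntegral.intervalIntegral_pos_of_pos_on
    (intervalIntegrable_betaKernel ha hb ⟨hc, hcd.le.trans hd⟩ ⟨hc.trans hcd.le, hd⟩)
    (fun _ ht ↦ betaKernel_pos a b (Ioo_subset_Ioo hc hd ht)) hcd

theorem integral_betaKernel_swap_lt (hb : 0 < b) (hab : b < a) (hc : 1 / 2 ≤ c) (hcd : c < d)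
    (hd : d ≤ 1) : ∫ t in c..d, betaKernel b a t < ∫ t in c..d, betaKernel a b t := by
  have ha : 0 < a := hb.trans hab
  have hc' : c ∈ Icc 0 1 := ⟨by linarith, by linarith⟩
  have hd' : d ∈ Icc 0 1 := ⟨by linarith, hd⟩
  exact integral_lt_integral_of_forall_mem_Ioo_lt
    (intervalIntegrable_betaKernel hb ha hc' hd') (intervalIntegrable_betaKernel ha hb hc' hd')
    (fun _ ht ↦ betaKernel_swap_lt hab (Ioo_subset_Ioo hc hd ht)) hcd

end BetaKernel

section BetaFn

variable {a b : ℝ}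

theorem betaFn_eq_integral_betaKernel (a b : ℝ) :
    betaFn a b = ∫ t in (0 : ℝ)..1, betaKernel a b t :=
  rfl

theorem I_eq_integral_betaKernel_div (a b : ℝ) :
    I a b = (∫ t in (1 / 2 : ℝ)..1, betaKernel a b t) / betaFn a b :=
  one_div_mul_eq_div _ _

theorem betaFn_comm (a b : ℝ) : betaFn a b = betaFn b a := by
  simp only [betaFn_eq_integral_betaKernel, ← betaKernel_one_sub a b,
    intervalIntegral.integral_comp_sub_left, sub_self, sub_zero]

theorem betaFn_pos (ha : 0 < a) (hb : 0 < b) : 0 < betaFn a b :=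
  integral_betaKernel_pos ha hb le_rfl zero_lt_one le_rfl

theorem integral_betaKernel_add_integral_betaKernel_swap {m : ℝ} (ha : 0 < a) (hb : 0 < b)
    (hm : m ∈ Icc 0 1) :
    (∫ t in m..1, betaKernel a b t) + ∫ t in (1 - m)..1, betaKernel b a t = betaFn a b := by
  simpa only [betaFn_eq_integral_betaKernel, zero_add, betaKernel_one_sub] using
    integral_add_integral_reflect
      (intervalIntegrable_betaKernel ha hb (left_mem_Icc.2 zero_le_one) hm)
      (intervalIntegrable_betaKernel ha hb hm (right_mem_Icc.2 zero_le_one))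

theorem I_add_I_swap (ha : 0 < a) (hb : 0 < b) : I a b + I b a = 1 := by
  have hsplit := integral_betaKernel_add_integral_betaKernel_swap ha hb
    (m := 1 / 2) ⟨by norm_num, by norm_num⟩
  rw [sub_half] at hsplit
  rw [I_eq_integral_betaKernel_div, I_eq_integral_betaKernel_div, betaFn_comm b a, ← add_div,
    hsplit, div_self (betaFn_pos ha hb).ne']

theorem I_swap_lt_I (hb : 0 < b) (hab : b < a) : I b a < I a b := by
  rw [I_eq_integral_betaKernel_div, I_eq_integral_betaKernel_div, betaFn_comm b a]
  exact div_lt_div_of_pos_right (integral_betaKernel_swap_lt hb hab le_rfl one_half_lt_one le_rfl)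
    (betaFn_pos (hb.trans hab) hb)

theorem I_swap_lt_I_iff (ha : 0 < a) (hb : 0 < b) : I b a < I a b ↔ b < a := by
  refine ⟨fun h ↦ lt_of_not_ge fun hab ↦ ?_, I_swap_lt_I hb⟩
  rcases hab.eq_or_lt with rfl | hab
  · exact h.false
  · exact h.not_gt (I_swap_lt_I ha hab)

end BetaFn

theorem I_gt_half_iff (a b : ℝ) (ha : 0 < a) (hb : 0 < b) :
    1 / 2 < I a b ↔ b < a := by
  have hsum : I a b + I b a = 1 := I_add_I_swap ha hb
  calc 1 / 2 < I a b ↔ I b a < I a b := by constructor <;> intro <;> linarith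
    _ ↔ b < a := I_swap_lt_I_iff ha hb
end

section
/- R⁺(a,b) tends to 0 as a+b tends to infinity over positive integers: for every ε > 0 there exists N such that for all positive integers a and b with a + b ≥ N, R⁺(a,b) < ε. -/
/-- `h(x) = max (x, 1-x)`. -/
noncomputable def hFn (x : ℝ) : ℝ := max x (1 - x)

/-- Expected stage-wise reward. -/
noncomputable def R (a b : ℝ) : ℝ :=
  a / (a + b) * (hFn (I (a + 1) b) - hFn (I a b)) +
    b / (a + b) * (hFn (I a (b + 1)) - hFn (I a b))

/-- Optimistic knowledge-gradient reward. -/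
noncomputable def Rplus (a b : ℝ) : ℝ :=
  max (hFn (I (a + 1) b) - hFn (I a b)) (hFn (I a (b + 1)) - hFn (I a b))

/-- Pessimistic knowledge-gradient reward. -/
noncomputable def Rminus (a b : ℝ) : ℝ :=
  min (hFn (I (a + 1) b) - hFn (I a b)) (hFn (I a (b + 1)) - hFn (I a b))

/-! With `B = B(a,b) = Γ(a) Γ(b) / Γ(a+b)`, integrating the derivative of `t^a (1-t)^b` over
`[1/2,1]` gives `I(a+1,b) - I(a,b) = 2^(-(a+b)) / (a B)` and
`I(a,b) - I(a,b+1) = 2^(-(a+b)) / (b B)`. Both have the form `2^(-s) Γ(s) / (Γ(x) Γ(y))` with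
`s = a + b` and `x + y = s + 1`. Log-convexity of `Γ` makes this largest at `x = y = (s+1)/2`, where
Legendre's duplication formula turns it into `Γ(s/2) / (2 √π Γ(s/2 + 1/2))`; log-convexity again
bounds this by `1 / √(2π(s-1))`. Since `h` is 1-Lipschitz, the same bound holds for `R⁺`. -/

open Real Set Filter MeasureTheory

section Gamma

lemma sq_Gamma_midpoint_le_mul {x y : ℝ} (hx : 0 < x) (hy : 0 < y) :
    Gamma ((x + y) / 2) ^ 2 ≤ Gamma x * Gamma y := by
  have h := Gamma_mul_add_mul_le_rpow_Gamma_mul_rpow_Gamma hx hy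
    (one_half_pos (α := ℝ)) one_half_pos (add_halves 1)
  rw [← mul_rpow (Gamma_pos_of_pos hx).le (Gamma_pos_of_pos hy).le, ← sqrt_eq_rpow,
    ← mul_add, one_div_mul_eq_div] at h
  exact (le_sqrt' (Gamma_pos_of_pos (by positivity))).1 h

lemma Gamma_div_Gamma_add_half_le {x : ℝ} (hx : 1 / 2 < x) :
    Gamma x / Gamma (x + 1 / 2) ≤ 1 / √(x - 1 / 2) := by
  have hx' : 0 < x - 1 / 2 := sub_pos.2 hx
  have hΓ : 0 < Gamma (x + 1 / 2) := Gamma_pos_of_pos (by linarith)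
  have hrec : Gamma (x + 1 / 2) = (x - 1 / 2) * Gamma (x - 1 / 2) := by
    rw [← Gamma_add_one hx'.ne']
    ring_nf
  have hsq : Gamma x ^ 2 ≤ Gamma (x - 1 / 2) * Gamma (x + 1 / 2) := by
    simpa using sq_Gamma_midpoint_le_mul hx' (by linarith : 0 < x + 1 / 2)
  rw [div_le_div_iff₀ hΓ (sqrt_pos.2 hx'), one_mul]
  refine le_of_sq_le_sq ?_ hΓ.le
  calc (Gamma x * √(x - 1 / 2)) ^ 2 = Gamma x ^ 2 * (x - 1 / 2) := by
        rw [mul_pow, sq_sqrt hx'.le]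
    _ ≤ Gamma (x - 1 / 2) * Gamma (x + 1 / 2) * (x - 1 / 2) := by gcongr
    _ = Gamma (x + 1 / 2) ^ 2 := by rw [hrec]; ring

lemma Gamma_div_Gamma_half_add_sq_div_two_rpow {s : ℝ} (hs : 0 < s) :
    Gamma s / Gamma ((s + 1) / 2) ^ 2 / 2 ^ s =
      Gamma (s / 2) / Gamma (s / 2 + 1 / 2) / (2 * √π) := by
  have hdup : Gamma (s / 2) * Gamma (s / 2 + 1 / 2) = Gamma s * (2 / 2 ^ s) * √π := by
    rw [Gamma_mul_Gamma_add_half, mul_div_cancel₀ s two_ne_zero, rpow_sub two_pos, rpow_one]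
  rw [add_div]
  field_simp at hdup ⊢
  linear_combination -hdup

lemma Gamma_sub_one_div_mul_div_two_rpow_le {x y : ℝ} (hx : 0 < x) (hy : 0 < y) (hxy : 2 < x + y) :
    Gamma (x + y - 1) / (Gamma x * Gamma y) / 2 ^ (x + y - 1) ≤ 1 / √(2 * π * (x + y - 2)) := by
  set s := x + y - 1 with hs
  have hs_one : 1 < s := by linarith
  have hs_half : 0 ≤ s / 2 - 1 / 2 := by linarith
  have hmid : Gamma ((s + 1) / 2) ^ 2 ≤ Gamma x * Gamma y := by
    simpa [hs] using sq_Gamma_midpoint_le_mul hx hy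
  have hsqrt : √(2 * π * (x + y - 2)) = √(s / 2 - 1 / 2) * (2 * √π) := by
    rw [show 2 * π * (x + y - 2) = (s / 2 - 1 / 2) * (2 ^ 2 * π) by rw [hs]; ring,
      sqrt_mul hs_half, sqrt_mul (by positivity), sqrt_sq zero_le_two]
  calc Gamma s / (Gamma x * Gamma y) / 2 ^ s
      ≤ Gamma s / Gamma ((s + 1) / 2) ^ 2 / 2 ^ s := by gcongr
    _ = Gamma (s / 2) / Gamma (s / 2 + 1 / 2) / (2 * √π) :=
        Gamma_div_Gamma_half_add_sq_div_two_rpow (by positivity)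
    _ ≤ 1 / √(s / 2 - 1 / 2) / (2 * √π) := by
        gcongr ?_ / _
        exact Gamma_div_Gamma_add_half_le (by linarith)
    _ = 1 / √(2 * π * (x + y - 2)) := by rw [hsqrt, div_div]

end Gamma

section BetaTail

/-- The upper incomplete Beta function `∫_c^1 t^(a-1) (1-t)^(b-1) dt`, so that `betaFn a b` is
`betaTail 0 a b` and `I a b` is `betaTail (1/2) a b / betaFn a b`. -/
noncomputable def betaTail (c a b : ℝ) : ℝ := ∫ t in c..1, t ^ (a - 1) * (1 - t) ^ (b - 1)

variable {a b c : ℝ}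

lemma ofReal_beta_integrand {t : ℝ} (ht : t ∈ Icc (0 : ℝ) 1) :
    ((t ^ (a - 1) * (1 - t) ^ (b - 1) : ℝ) : ℂ) =
      (t : ℂ) ^ ((a : ℂ) - 1) * (1 - (t : ℂ)) ^ ((b : ℂ) - 1) := by
  simp [Complex.ofReal_cpow ht.1, Complex.ofReal_cpow (sub_nonneg.2 ht.2)]

lemma intervalIntegrable_beta_integrand (ha : 0 < a) (hb : 0 < b) (hc : c ∈ Icc (0 : ℝ) 1) :
    IntervalIntegrable (fun t : ℝ ↦ t ^ (a - 1) * (1 - t) ^ (b - 1)) volume c 1 := by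
  have hℂ := Complex.betaIntegral_convergent (u := a) (v := b) (by simpa) (by simpa)
  have h01 : IntervalIntegrable (fun t : ℝ ↦ t ^ (a - 1) * (1 - t) ^ (b - 1)) volume 0 1 := by
    rw [intervalIntegrable_iff_integrableOn_Icc_of_le zero_le_one] at hℂ ⊢
    refine IntegrableOn.congr_fun hℂ.re (fun t ht ↦ ?_) measurableSet_Icc
    rw [← ofReal_beta_integrand ht]
    exact Complex.ofReal_re _
  refine h01.mono_set ?_
  rw [uIcc_of_le hc.2, uIcc_of_le zero_le_one]
  exact Icc_subset_Icc_left hc.1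

lemma betaFn_eq_beta (ha : 0 < a) (hb : 0 < b) : betaFn a b = ProbabilityTheory.beta a b := by
  have h : Complex.betaIntegral a b = (betaFn a b : ℂ) := by
    rw [betaFn, ← intervalIntegral.integral_ofReal]
    refine intervalIntegral.integral_congr fun t ht ↦ ?_
    exact (ofReal_beta_integrand (by rwa [uIcc_of_le zero_le_one] at ht)).symm
  rw [ProbabilityTheory.beta_eq_betaIntegralReal a b ha hb, h, Complex.ofReal_re]

lemma hasDerivAt_rpow_mul_one_sub_rpow {t : ℝ} (ht : t ∈ Ioo (0 : ℝ) 1) :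
    HasDerivAt (fun t : ℝ ↦ t ^ a * (1 - t) ^ b)
      (a * (t ^ (a - 1) * (1 - t) ^ (b - 1)) -
        (a + b) * (t ^ (a + 1 - 1) * (1 - t) ^ (b - 1))) t := by
  have ht0 := ht.1
  have ht1 := sub_pos.2 ht.2
  have hderiv := (hasDerivAt_rpow_const (p := a) (.inl ht0.ne')).mul
    (((hasDerivAt_id t).const_sub 1).rpow_const (p := b) (.inl ht1.ne'))
  refine hderiv.congr_deriv ?_
  have hta : t ^ a = t ^ (a - 1) * t := by
    rw [← rpow_add_one ht0.ne', sub_add_cancel]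
  have htb : (1 - t) ^ b = (1 - t) ^ (b - 1) * (1 - t) := by
    rw [← rpow_add_one ht1.ne', sub_add_cancel]
  simp only [id, add_sub_cancel_right, hta, htb]
  ring

lemma betaTail_add_one_left (ha : 0 < a) (hb : 0 < b) (hc : c ∈ Icc (0 : ℝ) 1) :
    (a + b) * betaTail c (a + 1) b = a * betaTail c a b + c ^ a * (1 - c) ^ b := by
  have hab := (intervalIntegrable_beta_integrand ha hb hc).const_mul a
  have hab' := (intervalIntegrable_beta_integrand (by positivity : 0 < a + 1) hb hc).const_mul
    (a + b)
  have hcont : Continuous fun t : ℝ ↦ t ^ a * (1 - t) ^ b :=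
    (continuous_id.rpow_const fun _ ↦ .inr ha.le).mul
      ((continuous_const.sub continuous_id).rpow_const fun _ ↦ .inr hb.le)
  have hFTC := intervalIntegral.integral_eq_sub_of_hasDerivAt_of_le hc.2 hcont.continuousOn
    (fun t ht ↦ hasDerivAt_rpow_mul_one_sub_rpow ⟨hc.1.trans_lt ht.1, ht.2⟩) (hab.sub hab')
  rw [intervalIntegral.integral_sub hab hab', intervalIntegral.integral_const_mul,
    intervalIntegral.integral_const_mul, sub_self, zero_rpow hb.ne', mul_zero] at hFTC
  unfold betaTail
  linarith

lemma betaTail_add_one_left_add_betaTail_add_one_right (ha : 0 < a) (hb : 0 < b)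
    (hc : c ∈ Icc (0 : ℝ) 1) :
    betaTail c (a + 1) b + betaTail c a (b + 1) = betaTail c a b := by
  unfold betaTail
  rw [← intervalIntegral.integral_add
    (intervalIntegrable_beta_integrand (by positivity) hb hc)
    (intervalIntegrable_beta_integrand ha (by positivity) hc)]
  refine intervalIntegral.integral_congr_Ioo_of_le hc.2 fun t ht ↦ ?_
  have ht0 : t ≠ 0 := (hc.1.trans_lt ht.1).ne'
  have ht1 : 1 - t ≠ 0 := (sub_pos.2 ht.2).ne'
  simp only [add_sub_right_comm, rpow_add_one ht0, rpow_add_one ht1]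
  ring

lemma betaTail_add_one_right (ha : 0 < a) (hb : 0 < b) (hc : c ∈ Icc (0 : ℝ) 1) :
    (a + b) * betaTail c a (b + 1) = b * betaTail c a b - c ^ a * (1 - c) ^ b := by
  linear_combination (a + b) * betaTail_add_one_left_add_betaTail_add_one_right ha hb hc -
    betaTail_add_one_left ha hb hc

end BetaTail

section Reward

variable {a b : ℝ}

lemma I_eq_betaTail_div_beta (ha : 0 < a) (hb : 0 < b) :
    I a b = betaTail (1 / 2) a b / ProbabilityTheory.beta a b := by
  rw [I, betaFn_eq_beta ha hb, betaTail, one_div_mul_eq_div]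

lemma half_rpow_mul_one_sub_half_rpow (a b : ℝ) :
    (1 / 2 : ℝ) ^ a * (1 - 1 / 2) ^ b = 1 / 2 ^ (a + b) := by
  rw [sub_half, ← rpow_add one_half_pos, div_rpow zero_le_one zero_le_two, one_rpow]

lemma I_add_one_left_sub_I (ha : 0 < a) (hb : 0 < b) :
    I (a + 1) b - I a b = Gamma (a + b) / (Gamma (a + 1) * Gamma b) / 2 ^ (a + b) := by
  have hrec := betaTail_add_one_left ha hb (c := 1 / 2) (by norm_num)
  rw [half_rpow_mul_one_sub_half_rpow] at hrec
  rw [I_eq_betaTail_div_beta (by positivity) hb, I_eq_betaTail_div_beta ha hb,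
    ProbabilityTheory.beta, ProbabilityTheory.beta, add_right_comm, Gamma_add_one ha.ne',
    Gamma_add_one (add_pos ha hb).ne']
  field_simp at hrec ⊢
  linear_combination hrec

lemma I_sub_I_add_one_right (ha : 0 < a) (hb : 0 < b) :
    I a b - I a (b + 1) = Gamma (a + b) / (Gamma a * Gamma (b + 1)) / 2 ^ (a + b) := by
  have hrec := betaTail_add_one_right ha hb (c := 1 / 2) (by norm_num)
  rw [half_rpow_mul_one_sub_half_rpow] at hrec
  rw [I_eq_betaTail_div_beta ha hb, I_eq_betaTail_div_beta ha (by positivity),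
    ProbabilityTheory.beta, ProbabilityTheory.beta, ← add_assoc, Gamma_add_one hb.ne',
    Gamma_add_one (add_pos ha hb).ne']
  field_simp at hrec ⊢
  linear_combination -hrec

lemma abs_I_add_one_left_sub_I_le (ha : 0 < a) (hb : 0 < b) (hab : 1 < a + b) :
    |I (a + 1) b - I a b| ≤ 1 / √(2 * π * (a + b - 1)) := by
  have hΓ := Gamma_sub_one_div_mul_div_two_rpow_le (by positivity : 0 < a + 1) hb (by linarith)
  rw [I_add_one_left_sub_I ha hb, abs_of_nonneg]
  · convert hΓ using 2 <;> ring_nf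
  · positivity

lemma abs_I_add_one_right_sub_I_le (ha : 0 < a) (hb : 0 < b) (hab : 1 < a + b) :
    |I a (b + 1) - I a b| ≤ 1 / √(2 * π * (a + b - 1)) := by
  have hΓ := Gamma_sub_one_div_mul_div_two_rpow_le ha (by positivity : 0 < b + 1) (by linarith)
  rw [abs_sub_comm, I_sub_I_add_one_right ha hb, abs_of_nonneg]
  · convert hΓ using 2 <;> ring_nf
  · positivity

lemma hFn_sub_hFn_le (x y : ℝ) : hFn x - hFn y ≤ |x - y| :=
  calc hFn x - hFn y ≤ |hFn x - hFn y| := le_abs_self _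
    _ ≤ max |x - y| |1 - x - (1 - y)| := abs_max_sub_max_le_max _ _ _ _
    _ = |x - y| := by rw [sub_sub_sub_cancel_left, abs_sub_comm y x, max_self]

lemma Rplus_le_one_div_sqrt (ha : 0 < a) (hb : 0 < b) (hab : 1 < a + b) :
    Rplus a b ≤ 1 / √(2 * π * (a + b - 1)) :=
  max_le ((hFn_sub_hFn_le _ _).trans (abs_I_add_one_left_sub_I_le ha hb hab))
    ((hFn_sub_hFn_le _ _).trans (abs_I_add_one_right_sub_I_le ha hb hab))

end Reward

lemma tendsto_one_div_sqrt_two_pi_mul_sub_one :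
    Tendsto (fun s : ℝ ↦ 1 / √(2 * π * (s - 1))) atTop (nhds 0) := by
  simp only [one_div]
  refine (tendsto_sqrt_atTop.comp (Tendsto.const_mul_atTop two_pi_pos ?_)).inv_tendsto_atTop
  exact tendsto_atTop_add_const_right _ (-1) tendsto_id

theorem Rplus_tendsto_zero_general :
    ∀ ε : ℝ, 0 < ε → ∃ N : ℕ, ∀ a b : ℝ, 0 < a → 0 < b → N ≤ a + b → Rplus a b < ε := by
  intro ε hε
  obtain ⟨S, hS⟩ := eventually_atTop.1 ((eventually_gt_atTop 1).and
    (tendsto_one_div_sqrt_two_pi_mul_sub_one.eventually_lt_const hε))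
  obtain ⟨N, hSN⟩ := exists_nat_ge S
  refine ⟨N, fun a b ha hb hN ↦ ?_⟩
  obtain ⟨hab, hlt⟩ := hS (a + b) (hSN.trans hN)
  exact (Rplus_le_one_div_sqrt ha hb hab).trans_lt hlt

theorem Rplus_tendsto_zero :
    ∀ ε : ℝ, 0 < ε → ∃ N : ℕ, ∀ a b : ℕ, 0 < a → 0 < b → N ≤ a + b →
      Rplus a b < ε := fun ε hε ↦
  (Rplus_tendsto_zero_general ε hε).imp fun _ hN a b ha hb hab ↦
    hN a b (mod_cast ha) (mod_cast hb) (mod_cast hab)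
end
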